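/- Let F ∈ ℝ^{m×m} and g ∈ ℝ^{m×1} with (F, g) controllable, let A ∈ ℝ^{n×n}, b ∈ ℝ^{n×1}, c ∈ ℝ^{1×n} with (A, b) controllable and (A, c) observable, and let h ∈ ℝ^{1×m} with h ≠ 0. Then there exists p ∈ ℝ such that the (m+n)-dimensional pair (M, q) is controllable, where M is the block lower-triangular matrix M = [[F, 0], [p·b·h, A − p·b·c]] and q = [g; 0] ∈ ℝ^{(m+n)×1}. (This is the induction step used to prove sufficiency in the structural controllability theorem for SISO networked relative coupling systems: a new subsystem A − p b c driven through the coupling p b h from an already-controllable part (F, g) can be made controllable by a suitable choice of the single coupling weight p.) -/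

import Mathlib

open Matrix
open scoped Kronecker

noncomputable section

/-- Kalman-matrix controllability of the pair `(M, Q)`. -/
def IsCtrb {R : Type*} [CommRing R] {ι κ : Type*} [Fintype ι] [Fintype κ] [DecidableEq ι]
    (M : Matrix ι ι R) (Q : Matrix ι κ R) : Prop :=
  (Matrix.of fun (i : ι) (jk : Fin (Fintype.card ι) × κ) =>
      (M ^ (jk.1 : ℕ) * Q) i jk.2).rank = Fintype.card ι

/-- Observability of `(M, c)`: controllability of `(Mᵀ, cᵀ)`. -/
def IsObsv {R : Type*} [CommRing R] {ι : Type*} [Fintype ι] [DecidableEq ι]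
    (M : Matrix ι ι R) (c : Matrix (Fin 1) ι R) : Prop :=
  IsCtrb Mᵀ cᵀ

/-- The weighted Laplacian of a digraph with edge set `E`:
`L(w)_{ij} = -w_{(j,i)}` for `i ≠ j` with `(j,i) ∈ E`, zero for other off-diagonal entries,
and diagonal entries making every row sum to zero. -/
def lapMat {R : Type*} [CommRing R] {N : ℕ} (E : Finset (Fin N × Fin N))
    (w : Fin N × Fin N → R) : Matrix (Fin N) (Fin N) R :=
  Matrix.of fun i j =>
    if i = j then ∑ k ∈ Finset.univ.filter (fun k => k ≠ i ∧ (k, i) ∈ E), w (k, i)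
    else if (j, i) ∈ E then -w (j, i) else 0

/-- The `N × |I_u|` matrix whose columns are the standard basis vectors `e_i`, `i ∈ I_u`. -/
def deltaMat {R : Type*} [CommRing R] {N : ℕ} (Iu : Finset (Fin N)) :
    Matrix (Fin N) {i // i ∈ Iu} R :=
  Matrix.of fun i j => if i = (j : Fin N) then 1 else 0

/-- Vertex `i` is reachable by a directed path (possibly of length zero) from a driving vertex. -/
def inputReachable {N : ℕ} (E : Finset (Fin N × Fin N)) (Iu : Finset (Fin N)) (i : Fin N) : Prop :=
  ∃ s ∈ Iu, Relation.ReflTransGen (fun a b => (a, b) ∈ E) s i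

open Polynomial

section Kalman

variable {K ι κ : Type*} [Field K] [Fintype ι] [Fintype κ] [DecidableEq ι]

/-- A pair over a field is controllable iff no nonzero row vector annihilates every `M ^ k * Q`. -/
theorem isCtrb_iff_forall_vecMul (M : Matrix ι ι K) (Q : Matrix ι κ K) :
    IsCtrb M Q ↔ ∀ v : ι → K, (∀ k : ℕ, v ᵥ* (M ^ k * Q) = 0) → v = 0 := by
  set G : Matrix ι (Fin (Fintype.card ι) × κ) K :=
    Matrix.of fun i jk => (M ^ (jk.1 : ℕ) * Q) i jk.2
  have hrank : IsCtrb M Q ↔ LinearIndependent K G.row := by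
    rw [linearIndependent_iff_card_eq_finrank_span, Set.finrank, ← rank_eq_finrank_span_row]
    exact eq_comm
  have hvec : ∀ v : ι → K,
      v ᵥ* G = 0 ↔ ∀ k < Fintype.card ι, v ᵥ* (M ^ k * Q) = 0 := by
    intro v
    constructor
    · intro hv k hk
      funext j
      exact congrFun hv (⟨k, hk⟩, j)
    · intro hv
      funext jk
      exact congrFun (hv jk.1 jk.1.2) jk.2
  have hinj : LinearIndependent K G.row ↔ ∀ v : ι → K, v ᵥ* G = 0 → v = 0 := by
    rw [← vecMul_injective_iff]
    exact injective_iff_map_eq_zero G.vecMulLinear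
  rw [hrank, hinj]
  refine forall_congr' fun v => ⟨fun H hv => H ((hvec v).2 fun k _ => hv k), fun H hv => H ?_⟩
  rw [hvec] at hv
  intro k
  rw [pow_eq_aeval_mod_charpoly]
  rcases isEmpty_or_nonempty ι with hι | hι
  · rw [Subsingleton.elim v 0, zero_vecMul]
  have hdeg : (X ^ k %ₘ M.charpoly).natDegree < Fintype.card ι := by
    rw [← M.charpoly_natDegree_eq_dim]
    refine natDegree_modByMonic_lt _ M.charpoly_monic fun h1 => ?_
    have := M.charpoly_natDegree_eq_dim
    rw [h1, natDegree_one] at this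
    exact Fintype.card_ne_zero this.symm
  rw [aeval_eq_sum_range' hdeg, Matrix.sum_mul, vecMul_sum]
  refine Finset.sum_eq_zero fun i hi => ?_
  rw [Matrix.smul_mul, vecMul_smul, hv i (Finset.mem_range.1 hi), smul_zero]

theorem vecMul_pow_of_vecMul_eq_smul {M : Matrix ι ι K} {v : ι → K} {μ : K}
    (hv : v ᵥ* M = μ • v) (k : ℕ) : v ᵥ* M ^ k = μ ^ k • v := by
  induction k with
  | zero => simp
  | succ k ih => rw [pow_succ, ← vecMul_vecMul, ih, smul_vecMul, hv, smul_smul, pow_succ]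

/-- The input matrix of a controllable pair annihilates no left eigenvector. -/
theorem IsCtrb.eq_zero_of_vecMul_eq_smul {M : Matrix ι ι K} {Q : Matrix ι κ K} (hMQ : IsCtrb M Q)
    {v : ι → K} {μ : K} (hv : v ᵥ* M = μ • v) (hQ : v ᵥ* Q = 0) : v = 0 := by
  refine (isCtrb_iff_forall_vecMul M Q).1 hMQ v fun k => ?_
  rw [← vecMul_vecMul, vecMul_pow_of_vecMul_eq_smul hv, smul_vecMul, hQ, smul_zero]

/-- The Hautus test over an algebraically closed field. -/
theorem isCtrb_of_forall_eigenvector [IsAlgClosed K] {M : Matrix ι ι K} {Q : Matrix ι κ K}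
    (H : ∀ (v : ι → K) (μ : K), v ᵥ* M = μ • v → v ᵥ* Q = 0 → v = 0) : IsCtrb M Q := by
  rw [isCtrb_iff_forall_vecMul]
  let W : Submodule K (ι → K) := ⨅ k : ℕ, LinearMap.ker (M ^ k * Q).vecMulLinear
  have hmem : ∀ v, v ∈ W ↔ ∀ k : ℕ, v ᵥ* (M ^ k * Q) = 0 := by
    intro v
    simp [W, Submodule.mem_iInf]
  have hinv : ∀ v ∈ W, M.vecMulLinear v ∈ W := by
    intro v hv
    rw [hmem] at hv ⊢
    intro k
    rw [vecMulLinear_apply, vecMul_vecMul, ← Matrix.mul_assoc, ← pow_succ']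
    exact hv (k + 1)
  intro v hv
  by_contra hv0
  have : Nontrivial W := ⟨⟨⟨v, (hmem v).2 hv⟩, 0, fun h => hv0 (congrArg Subtype.val h)⟩⟩
  obtain ⟨μ, hμ⟩ := Module.End.exists_eigenvalue (M.vecMulLinear.restrict hinv)
  obtain ⟨w, hw⟩ := hμ.exists_hasEigenvector
  refine hw.2 (Subtype.ext (H w μ (congrArg Subtype.val hw.apply_eq_smul) ?_))
  simpa using (hmem w).1 w.2 0

end Kalman

/-- Controllability of a real pair may be tested over the complex numbers. -/
theorem isCtrb_map_ofReal_iff {ι κ : Type*} [Fintype ι] [Fintype κ] [DecidableEq ι]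
    (M : Matrix ι ι ℝ) (Q : Matrix ι κ ℝ) :
    IsCtrb (M.map Complex.ofRealHom) (Q.map Complex.ofRealHom) ↔ IsCtrb M Q := by
  have hmap : ∀ k : ℕ, M.map Complex.ofRealHom ^ k * Q.map Complex.ofRealHom =
      (M ^ k * Q).map Complex.ofRealHom := by
    intro k
    rw [Matrix.map_mul, Matrix.map_pow]
  simp only [isCtrb_iff_forall_vecMul, hmap]
  constructor
  · intro H v hv
    have h0 := H (fun i => (v i : ℂ)) fun k => by
      funext j
      have := congrArg Complex.ofRealHom (congrFun (hv k) j)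
      rw [RingHom.map_vecMul] at this
      exact this.trans (map_zero _)
    funext i
    exact Complex.ofReal_injective (congrFun h0 i)
  · intro H v hv
    have hre := H (fun i => (v i).re) fun k => by
      funext j
      have := congrArg Complex.re (congrFun (hv k) j)
      simpa [vecMul, dotProduct] using this
    have him := H (fun i => (v i).im) fun k => by
      funext j
      have := congrArg Complex.im (congrFun (hv k) j)
      simpa [vecMul, dotProduct] using this
    funext i
    exact Complex.ext (congrFun hre i) (congrFun him i)

section Transfer

variable {K : Type*} [Field K] {m n : ℕ}

theorem degree_adjugate_charmatrix_lt (F : Matrix (Fin m) (Fin m) K) (i j : Fin m) :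
    (adjugate (charmatrix F) i j).degree < m := by
  cases m with
  | zero => exact i.elim0
  | succ m =>
    rw [adjugate_fin_succ_eq_det_submatrix]
    have hsub : (charmatrix F).submatrix j.succAbove i.succAbove =
        (X : K[X]) • ((1 : Matrix (Fin (m + 1)) (Fin (m + 1)) K).submatrix
          j.succAbove i.succAbove).map C + ((-F).submatrix j.succAbove i.succAbove).map C := by
      ext1 a b
      simp [charmatrix_apply, diagonal_apply, one_apply, sub_eq_add_neg]
    have hdeg := natDegree_det_X_add_C_le
      ((1 : Matrix (Fin (m + 1)) (Fin (m + 1)) K).submatrix j.succAbove i.succAbove)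
      ((-F).submatrix j.succAbove i.succAbove)
    rw [← hsub, Fintype.card_fin] at hdeg
    have hC : ((-1 : K[X]) ^ (j + i : ℕ)) = C ((-1) ^ (j + i : ℕ)) := by simp
    rw [hC]
    rw [degree_C_mul (pow_ne_zero _ (neg_ne_zero.2 one_ne_zero))]
    refine lt_of_le_of_lt (natDegree_le_iff_degree_le.1 hdeg) ?_
    exact_mod_cast Nat.lt_succ_self m

/-- The numerator `r adj(X - F) g` of the transfer function of `(F, g, r)`. -/
def transferNumerator (F : Matrix (Fin m) (Fin m) K) (g r : Fin m → K) : K[X] :=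
  ((C ∘ r) ᵥ* adjugate (charmatrix F)) ⬝ᵥ (C ∘ g)

theorem degree_transferNumerator_lt (F : Matrix (Fin m) (Fin m) K) (g r : Fin m → K) :
    (transferNumerator F g r).degree < m := by
  rw [← mem_degreeLT, transferNumerator]
  simp only [dotProduct, vecMul, Function.comp_apply]
  refine Submodule.sum_mem _ fun j _ => ?_
  rw [mul_comm, ← smul_eq_C_mul]
  refine Submodule.smul_mem _ _ (Submodule.sum_mem _ fun i _ => ?_)
  rw [← smul_eq_C_mul]
  exact Submodule.smul_mem _ _ (mem_degreeLT.2 (degree_adjugate_charmatrix_lt F i j))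

theorem transferNumerator_vecMul (F : Matrix (Fin m) (Fin m) K) (g r : Fin m → K) :
    transferNumerator F g (r ᵥ* F) =
      X * transferNumerator F g r - F.charpoly * C (r ⬝ᵥ g) := by
  have hadj : F.map C * adjugate (charmatrix F) =
      (X : K[X]) • adjugate (charmatrix F) - F.charpoly • 1 := by
    have h1 : (Matrix.scalar (Fin m) (X : K[X]) - F.map C) * adjugate (charmatrix F) =
      F.charpoly • 1 := mul_adjugate (charmatrix F)
    rw [← h1, Matrix.sub_mul, Matrix.scalar_apply, ← smul_eq_diagonal_mul, sub_sub_cancel]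
  have hr : (C ∘ (r ᵥ* F) : Fin m → K[X]) = (C ∘ r) ᵥ* F.map C := by
    funext i
    exact RingHom.map_vecMul C F r i
  have hg : (C ∘ r) ⬝ᵥ (C ∘ g) = C (r ⬝ᵥ g) := (RingHom.map_dotProduct C r g).symm
  rw [transferNumerator, hr, vecMul_vecMul, hadj, vecMul_sub, vecMul_smul, vecMul_smul, vecMul_one,
    sub_dotProduct, smul_dotProduct, smul_dotProduct, hg, smul_eq_mul, smul_eq_mul,
    transferNumerator]

/-- A controllable single-input system with nonzero output row has a nonzero transfer function. -/
theorem transferNumerator_ne_zero {F : Matrix (Fin m) (Fin m) K} {g : Matrix (Fin m) (Fin 1) K}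
    (hFg : IsCtrb F g) {r : Fin m → K} (hr : r ≠ 0) :
    transferNumerator F (fun i => g i 0) r ≠ 0 := by
  intro h0
  have hstep : ∀ s : Fin m → K, transferNumerator F (fun i => g i 0) s = 0 →
      s ⬝ᵥ (fun i => g i 0) = 0 ∧ transferNumerator F (fun i => g i 0) (s ᵥ* F) = 0 := by
    intro s hs
    have hrec := transferNumerator_vecMul F (fun i => g i 0) s
    have hz : s ⬝ᵥ (fun i => g i 0) = 0 := by
      by_contra hne
      have hlt := degree_transferNumerator_lt F (fun i => g i 0) (s ᵥ* F)
      rw [hrec, hs, mul_zero, zero_sub, degree_neg, degree_mul_C hne,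
        F.charpoly_degree_eq_dim, Fintype.card_fin] at hlt
      exact lt_irrefl _ hlt
    refine ⟨hz, ?_⟩
    rw [hrec, hs, hz, mul_zero, C_0, mul_zero, sub_zero]
  have hall : ∀ k : ℕ, transferNumerator F (fun i => g i 0) (r ᵥ* F ^ k) = 0 := by
    intro k
    induction k with
    | zero => simpa using h0
    | succ k ih => rw [pow_succ, ← vecMul_vecMul]; exact (hstep _ ih).2
  refine hr ((isCtrb_iff_forall_vecMul F g).1 hFg r fun k => ?_)
  funext j
  rw [Subsingleton.elim j 0, ← vecMul_vecMul]
  exact (hstep _ (hall k)).1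

theorem eval_transferNumerator_eq_zero {F : Matrix (Fin m) (Fin m) K} {g r x : Fin m → K} {μ : K}
    (hx : μ • x - x ᵥ* F = r) (hg : x ⬝ᵥ g = 0) : (transferNumerator F g r).eval μ = 0 := by
  have hrec := transferNumerator_vecMul F g x
  have hlin : transferNumerator F g r =
      C μ * transferNumerator F g x - transferNumerator F g (x ᵥ* F) := by
    have hC : (C ∘ r : Fin m → K[X]) = C μ • (C ∘ x) - C ∘ (x ᵥ* F) := by
      funext i
      simp [← hx]
    rw [transferNumerator, hC, sub_vecMul, smul_vecMul, sub_dotProduct, smul_dotProduct,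
      smul_eq_mul, transferNumerator, transferNumerator]
  rw [hlin, hrec, hg]
  simp

/-- Under output feedback on a controllable and observable system, a given scalar is an eigenvalue
for at most one feedback gain. -/
theorem feedback_gain_unique {A : Matrix (Fin n) (Fin n) K} {b : Matrix (Fin n) (Fin 1) K}
    {c : Matrix (Fin 1) (Fin n) K} (hAb : IsCtrb A b) (hAc : IsObsv A c) {μ p q : K}
    {y z : Fin n → K} (hy : y ᵥ* (A - p • (b * c)) = μ • y) (hy0 : y ≠ 0)
    (hz : z ᵥ* (A - q • (b * c)) = μ • z) (hz0 : z ≠ 0) : p = q := by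
  have hdet : (A - q • (b * c) - μ • 1).det = 0 :=
    exists_vecMul_eq_zero_iff.1 ⟨z, hz0, by rw [vecMul_sub, hz, vecMul_smul, vecMul_one, sub_self]⟩
  obtain ⟨w, hw0, hw⟩ := exists_mulVec_eq_zero_iff.2 hdet
  rw [sub_mulVec, smul_mulVec, one_mulVec, sub_eq_zero] at hw
  have hyA : y ᵥ* A = μ • y + p • (y ᵥ* b ᵥ* c) := by
    rw [← hy, vecMul_sub, vecMul_smul, vecMul_vecMul, sub_add_cancel]
  have hwA : A *ᵥ w = μ • w + q • (b *ᵥ (c *ᵥ w)) := by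
    rw [← hw, sub_mulVec, smul_mulVec, mulVec_mulVec, sub_add_cancel]
  have hyb : (y ᵥ* b) 0 ≠ 0 := by
    intro h0
    have hyb0 : y ᵥ* b = 0 := funext fun j => by rw [Subsingleton.elim j 0, h0]; rfl
    refine hy0 (hAb.eq_zero_of_vecMul_eq_smul (μ := μ) ?_ hyb0)
    rw [hyA, hyb0, zero_vecMul, smul_zero, add_zero]
  have hcw : (c *ᵥ w) 0 ≠ 0 := by
    intro h0
    have hcw0 : c *ᵥ w = 0 := funext fun j => by rw [Subsingleton.elim j 0, h0]; rfl
    refine hw0 (IsCtrb.eq_zero_of_vecMul_eq_smul hAc (μ := μ) ?_ ?_)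
    · rw [vecMul_transpose, hwA, hcw0, mulVec_zero, smul_zero, add_zero]
    · rw [vecMul_transpose, hcw0]
  have hkey : (y ᵥ* A) ⬝ᵥ w = y ⬝ᵥ (A *ᵥ w) := (dotProduct_mulVec y A w).symm
  have hprod : (y ᵥ* b) ⬝ᵥ (c *ᵥ w) = (y ᵥ* b) 0 * (c *ᵥ w) 0 := by simp [dotProduct]
  rw [hyA, hwA, add_dotProduct, dotProduct_add, smul_dotProduct, smul_dotProduct, dotProduct_smul,
    dotProduct_smul, ← dotProduct_mulVec, dotProduct_mulVec y b, hprod] at hkey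
  exact mul_right_cancel₀ (mul_ne_zero hyb hcw) (add_left_cancel hkey)

/-- Over an algebraically closed field, all but finitely many coupling weights make the cascade
controllable. -/
theorem finite_setOf_not_isCtrb_cascade [IsAlgClosed K]
    {F : Matrix (Fin m) (Fin m) K} {g : Matrix (Fin m) (Fin 1) K}
    {A : Matrix (Fin n) (Fin n) K} {b : Matrix (Fin n) (Fin 1) K} {c : Matrix (Fin 1) (Fin n) K}
    {h : Matrix (Fin 1) (Fin m) K}
    (hFg : IsCtrb F g) (hAb : IsCtrb A b) (hAc : IsObsv A c) (hh : h ≠ 0) :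
    {p : K | ¬ IsCtrb (fromBlocks F 0 (p • (b * h)) (A - p • (b * c)))
      (fromRows g (0 : Matrix (Fin n) (Fin 1) K))}.Finite := by
  have hh0 : h 0 ≠ 0 := fun h0 => hh (by
    ext i j
    rw [Subsingleton.elim i 0]
    exact congrFun h0 j)
  set T := transferNumerator F (fun i => g i 0) (h 0)
  have hT0 : T ≠ 0 := transferNumerator_ne_zero hFg hh0
  have hfin : ({0} ∪ ⋃ μ ∈ {μ : K | T.IsRoot μ},
      {p : K | ∃ y ≠ 0, y ᵥ* (A - p • (b * c)) = μ • y}).Finite := by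
    refine (Set.finite_singleton 0).union ((finite_setOfPred_isRoot hT0).biUnion fun μ _ => ?_)
    refine Set.Subsingleton.finite ?_
    rintro p ⟨y, hy0, hy⟩ q ⟨z, hz0, hz⟩
    exact feedback_gain_unique hAb hAc hy hy0 hz hz0
  refine hfin.subset fun p hp => ?_
  by_contra hgood
  simp only [Set.mem_union, Set.mem_singleton_iff, Set.mem_iUnion, Set.mem_ofPred_eq, not_or,
    not_exists] at hgood
  obtain ⟨hp0, hgood⟩ := hgood
  refine hp (isCtrb_of_forall_eigenvector fun v μ hv hvg => ?_)
  obtain ⟨x, y, rfl⟩ : ∃ x y, v = Sum.elim x y := ⟨_, _, (Sum.elim_comp_inl_inr v).symm⟩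
  rw [vecMul_fromBlocks] at hv
  have hx : x ᵥ* F + p • (y ᵥ* b ᵥ* h) = μ • x := by
    funext i
    simpa [vecMul_smul, vecMul_vecMul] using congrFun hv (Sum.inl i)
  have hy : y ᵥ* (A - p • (b * c)) = μ • y := by
    funext i
    simpa using congrFun hv (Sum.inr i)
  have hxg : x ᵥ* g = 0 := by
    simpa [vecMul_fromRows] using hvg
  have hy0 : y = 0 := by
    by_contra hy0
    have hyb : (y ᵥ* b) 0 ≠ 0 := by
      intro h0
      have hyb0 : y ᵥ* b = 0 := funext fun j => by rw [Subsingleton.elim j 0, h0]; rfl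
      refine hy0 (hAb.eq_zero_of_vecMul_eq_smul (μ := μ) ?_ hyb0)
      rw [← hy, vecMul_sub, vecMul_smul, ← vecMul_vecMul, hyb0, zero_vecMul, smul_zero, sub_zero]
    have hbh : y ᵥ* b ᵥ* h = (y ᵥ* b) 0 • h 0 := by
      funext i
      simp [vecMul, dotProduct]
    have hα : p * (y ᵥ* b) 0 ≠ 0 := mul_ne_zero hp0 hyb
    refine hgood μ (eval_transferNumerator_eq_zero
      (x := (p * (y ᵥ* b) 0)⁻¹ • x) ?_ ?_) y ⟨hy0, hy⟩
    · rw [smul_vecMul, smul_comm, ← smul_sub, ← hx, add_sub_cancel_left, hbh, smul_smul p,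
        inv_smul_smul₀ hα]
    · rw [smul_dotProduct]
      exact (congrArg _ (congrFun hxg 0)).trans (smul_zero _)
  subst hy0
  have hx0 : x = 0 := by
    refine hFg.eq_zero_of_vecMul_eq_smul (μ := μ) ?_ hxg
    rw [← hx, zero_vecMul, zero_vecMul, smul_zero, add_zero]
  rw [hx0]
  exact Sum.elim_zero_zero

end Transfer

/-- induction step in the proof of Theorem 1 of the paper. If `(F, g)` is
controllable, `(A, b)` is controllable, `(A, c)` is observable, and `h ≠ 0`, then some single
coupling weight `p` renders the cascaded pair
`([[F, 0], [p b h, A - p b c]], [g; 0])` controllable. -/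
theorem stmt12 {m n : ℕ}
    (F : Matrix (Fin m) (Fin m) ℝ) (g : Matrix (Fin m) (Fin 1) ℝ)
    (A : Matrix (Fin n) (Fin n) ℝ) (b : Matrix (Fin n) (Fin 1) ℝ) (c : Matrix (Fin 1) (Fin n) ℝ)
    (h : Matrix (Fin 1) (Fin m) ℝ)
    (hFg : IsCtrb F g) (hAb : IsCtrb A b) (hAc : IsObsv A c) (hh : h ≠ 0) :
    ∃ p : ℝ,
      IsCtrb (Matrix.fromBlocks F 0 (p • (b * h)) (A - p • (b * c)))
        (Matrix.fromRows g (0 : Matrix (Fin n) (Fin 1) ℝ)) := by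
  have hfin := finite_setOf_not_isCtrb_cascade (h := h.map Complex.ofRealHom)
    ((isCtrb_map_ofReal_iff F g).2 hFg) ((isCtrb_map_ofReal_iff A b).2 hAb)
    (show IsObsv (A.map Complex.ofRealHom) (c.map Complex.ofRealHom) from
      (isCtrb_map_ofReal_iff Aᵀ cᵀ).2 hAc)
    (fun h0 => hh (Matrix.map_injective Complex.ofReal_injective (h0.trans (by ext; simp))))
  obtain ⟨p, hp⟩ := (hfin.preimage Complex.ofReal_injective.injOn).infinite_compl.nonempty
  refine ⟨p, (isCtrb_map_ofReal_iff _ _).1 ?_⟩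
  simp only [Set.mem_compl_iff, Set.mem_preimage, Set.mem_ofPred_eq, not_not] at hp
  have hM : (fromBlocks F 0 (p • (b * h)) (A - p • (b * c))).map Complex.ofRealHom =
      fromBlocks (F.map Complex.ofRealHom) 0
        ((p : ℂ) • (b.map Complex.ofRealHom * h.map Complex.ofRealHom))
        (A.map Complex.ofRealHom -
          (p : ℂ) • (b.map Complex.ofRealHom * c.map Complex.ofRealHom)) := by
    ext (i | i) (j | j) <;> simp [Matrix.mul_apply]
  have hq : (fromRows g (0 : Matrix (Fin n) (Fin 1) ℝ)).map Complex.ofRealHom =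
      fromRows (g.map Complex.ofRealHom) 0 := by
    ext (i | i) j <;> simp
  rw [hM, hq]
  exact hp
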